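/- arXiv:2207.03594 — 2 statements merged into one kernel-verified Lean document; each statement's English description precedes it below -/
import Mathlib

section
/- Fix d ≥ 2 and a fraction p/q in lowest terms with q ≥ 2, 1 ≤ p ≤ q−1, gcd(p,q) = 1, and let p* be the multiplicative inverse of p in ℤ/qℤ. For 1 ≤ i ≤ n let O_i be the orbit under σ_d of the point t_i = (a_0^{(i)}, a_1^{(i)}, ..., a_{q-1}^{(i)}) (a q-tuple of digits in {0,...,d−1}), with |O_i| = q, the orbits O_1, ..., O_n pairwise distinct, and t_1 < t_2 < ... < t_n. Then [each t_i is the least element of O_i, and A = O_1 ∪ ... ∪ O_n is σ_d-rotational with rotation number p/q] if and only if the interleaved sequence a_0^{(1)}, a_0^{(2)}, ..., a_0^{(n)}, a_{p*}^{(1)}, ..., a_{p*}^{(n)}, a_{2p*}^{(1)}, ..., a_{2p*}^{(n)}, ..., a_{(q-1)p*}^{(1)}, ..., a_{(q-1)p*}^{(n)} (digit indices computed in ℤ/qℤ) is nondecreasing and moreover a_{-(p+1)p*}^{(n)} < a_{-p·p*}^{(1)} (indices in ℤ/qℤ). -/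
/-- The angle-multiplying map `σ_d : 𝕋 → 𝕋`, where the circle `𝕋 = ℝ/ℤ` is identified with
the set of representatives `[0,1) ⊆ ℝ` (and so ordered by comparing these representatives). -/
noncomputable def sigmad (d : ℕ) (t : ℝ) : ℝ := Int.fract (d * t)

/-- The orbit of a point of the circle under `σ_d`. -/
def sigmaOrbit (d : ℕ) (t : ℝ) : Set ℝ := {s | ∃ k : ℕ, (sigmad d)^[k] t = s}

/-- `t : ZMod q → ℝ` lists (with indices viewed in `ℤ/qℤ`) the elements
`t 0 < t 1 < ⋯ < t (q-1)` of a `σ_d`-rotational set with rotation number `p/q`. -/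
def IsRotational (d q : ℕ) (p : ZMod q) (t : ZMod q → ℝ) : Prop :=
  (∀ i, t i ∈ Set.Ico (0:ℝ) 1) ∧
  (∀ i j : ZMod q, i.val < j.val → t i < t j) ∧
  p ≠ 0 ∧
  ∀ i, sigmad d (t i) = t (i + p)

/-- The point of the circle with repeating base-`d` expansion `0.‾(a_0 a_1 … a_{q-1})`. -/
noncomputable def tuplePoint (d q : ℕ) (a : ZMod q → ℕ) : ℝ :=
  Int.fract ((∑ i ∈ Finset.range q, (a (i : ZMod q) : ℝ) * (d : ℝ) ^ (q - 1 - i)) /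
    ((d : ℝ) ^ q - 1))

/-!
Read the interleaved sequence of the points `σ_d^k(t_i)` as a function `X` on `ℤ/nqℤ`, so that `σ_d`
becomes translation by `np`.  The left-hand side says that `X` is increasing: the minimality of the
`t_i` forces the first `n` elements of a rotational listing to be the `t_i`, and the dynamics then
forces the rest.  On the other hand no tuple has all its digits equal to `d - 1`, so that
`d * X j = b j + X (j + np)`, where `b` is the interleaved digit sequence, and `X` is ordered
lexicographically by `(b j, X (j + np))`.  Hence an increasing `X` has
nondecreasing digits, with a jump at `-np` because `X (-1) > X 0`.  Conversely, the digit conditions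
propagate an ascent of `X` at `j + np` to an ascent at `j`; as `p` is invertible modulo `q`, this
reaches every position from the wrap-around `-1` or from one of the given ascents `t_i < t_{i+1}`.
-/

section CyclicOrder

variable {N : ℕ} [NeZero N]

lemma val_add_one_of_ne_neg_one {j : ZMod N} (hj : j ≠ -1) : (j + 1).val = j.val + 1 := by
  have hne : j.val + 1 ≠ N := fun h ↦ hj <| by
    rw [eq_neg_iff_add_eq_zero, ← ZMod.natCast_zmod_val j, ← Nat.cast_succ, Nat.succ_eq_add_one, h,
      ZMod.natCast_self]
  have hlt : j.val + 1 < N := lt_of_le_of_ne (ZMod.val_lt j) hne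
  rw [← ZMod.val_natCast_of_lt hlt, Nat.cast_succ, ZMod.natCast_zmod_val]

lemma forall_natCast_iff_forall_ne_neg_one {P : ZMod N → Prop} :
    (∀ j : ℕ, j + 1 < N → P j) ↔ ∀ j : ZMod N, j ≠ -1 → P j := by
  refine ⟨fun h j hj ↦ ?_, fun h j hj ↦ h j fun hj' ↦ ?_⟩
  · rw [← ZMod.natCast_zmod_val j]
    exact h _ (val_add_one_of_ne_neg_one hj ▸ ZMod.val_lt (j + 1))
  · rw [eq_neg_iff_add_eq_zero, ← Nat.cast_succ, ZMod.natCast_eq_zero_iff] at hj'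
    exact hj.not_ge (Nat.le_of_dvd j.succ_pos hj')

lemma rel_of_val_lt_of_forall_rel_add_one {α : Type*} (r : α → α → Prop) [IsTrans α r]
    {f : ZMod N → α} (h : ∀ j ≠ -1, r (f j) (f (j + 1))) {i j : ZMod N} (hij : i.val < j.val) :
    r (f i) (f j) := by
  have hstep : ∀ k : ℕ, i.val + k + 1 < N → r (f (i + k)) (f (i + k + 1)) := fun k hk ↦ by
    simpa using forall_natCast_iff_forall_ne_neg_one.2 h (i.val + k) hk
  have hreach : ∀ k : ℕ, i.val + k + 1 < N → r (f i) (f (i + k + 1)) := by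
    intro k hk
    induction k with
    | zero => simpa using hstep 0 hk
    | succ k ih =>
      refine _root_.trans (ih (Nat.lt_of_succ_lt hk)) ?_
      simpa [add_assoc] using hstep (k + 1) hk
  obtain ⟨k, hk⟩ := Nat.exists_eq_add_of_lt hij
  have hj : j = i + k + 1 := by
    rw [← ZMod.natCast_zmod_val j, hk]
    simp only [Nat.cast_add, ZMod.natCast_zmod_val, Nat.cast_one]
  exact hj ▸ hreach k (hk ▸ ZMod.val_lt j)

end CyclicOrder

section BlockShift

/-- The embedding `ℤ/qℤ → ℤ/nqℤ`, `k ↦ n * k`: position `i + blockShift n q k` is the `i`-th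
entry of the `k`-th block of length `n`. -/
def blockShift (n q : ℕ) : ZMod q →+ ZMod (n * q) :=
  ZMod.lift q ⟨(AddMonoidHom.mulLeft (n : ZMod (n * q))).comp (Int.castAddHom _), by
    simp [← Nat.cast_mul]⟩

variable {n q : ℕ}

lemma blockShift_natCast (k : ℕ) : blockShift n q k = ((n * k : ℕ) : ZMod (n * q)) := by
  have h := ZMod.lift_coe q ⟨(AddMonoidHom.mulLeft (n : ZMod (n * q))).comp (Int.castAddHom _), by
    simp [← Nat.cast_mul]⟩ (k : ℤ)
  simpa [blockShift] using h

lemma blockShift_one : blockShift n q 1 = n := by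
  simpa using blockShift_natCast (n := n) (q := q) 1

lemma natCast_add_blockShift [NeZero q] (i : ℕ) (k : ZMod q) :
    (i : ZMod (n * q)) + blockShift n q k = ((i + n * k.val : ℕ) : ZMod (n * q)) := by
  rw [Nat.cast_add, ← blockShift_natCast, ZMod.natCast_zmod_val]

lemma val_natCast_add_blockShift [NeZero q] {i : ℕ} (hi : i < n) (k : ZMod q) :
    ((i : ZMod (n * q)) + blockShift n q k).val = i + n * k.val := by
  rw [natCast_add_blockShift, ZMod.val_natCast_of_lt]
  calc i + n * k.val < n * (k.val + 1) := by rw [Nat.mul_succ]; omega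
    _ ≤ n * q := Nat.mul_le_mul_left n (ZMod.val_lt k)

lemma val_natCast_of_lt_block [NeZero q] {i : ℕ} (hi : i < n) : (i : ZMod (n * q)).val = i := by
  simpa using val_natCast_add_blockShift hi (0 : ZMod q)

lemma exists_eq_natCast_add_blockShift [NeZero n] [NeZero q] (j : ZMod (n * q)) :
    ∃ i < n, ∃ k : ZMod q, j = i + blockShift n q k := by
  refine ⟨j.val % n, Nat.mod_lt _ (NeZero.pos n), (j.val / n : ℕ), ?_⟩
  rw [blockShift_natCast, ← Nat.cast_add, Nat.mod_add_div, ZMod.natCast_zmod_val]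

lemma pred_add_blockShift [NeZero n] (k : ZMod q) :
    ((n - 1 : ℕ) : ZMod (n * q)) + blockShift n q k = -1 + blockShift n q (k + 1) := by
  rw [map_add, blockShift_one, Nat.cast_pred (NeZero.pos n)]
  ring

lemma neg_blockShift_sub_one [NeZero n] (k : ZMod q) :
    -blockShift n q k - 1 = ((n - 1 : ℕ) : ZMod (n * q)) + blockShift n q (-(k + 1)) := by
  rw [pred_add_blockShift, neg_add, neg_add_cancel_right, map_neg, sub_eq_neg_add]

variable {p : ℕ} [NeZero q]

lemma blockShift_ne_zero [NeZero n] {k : ZMod q} (hk : k ≠ 0) : blockShift n q k ≠ 0 := by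
  intro h
  have hval := val_natCast_add_blockShift (NeZero.pos n) k
  simp [h, NeZero.ne n, hk] at hval

lemma nsmul_blockShift (hpq : p.Coprime q) (k : ZMod q) :
    (k * (p : ZMod q)⁻¹).val • blockShift n q p = blockShift n q k := by
  rw [← map_nsmul, nsmul_eq_mul, ZMod.natCast_zmod_val, mul_right_comm, mul_assoc,
    ZMod.coe_mul_inv_eq_one p hpq, mul_one]

lemma iterate_apply_eq_apply_add_blockShift {α : Type*} {σ : α → α} {f : ZMod (n * q) → α}
    (hf : ∀ j, σ (f j) = f (j + blockShift n q p)) (hpq : p.Coprime q)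
    (j : ZMod (n * q)) (k : ZMod q) :
    σ^[(k * (p : ZMod q)⁻¹).val] (f j) = f (j + blockShift n q k) := by
  have hsemi : Function.Semiconj f (· + blockShift n q p) σ := fun j ↦ (hf j).symm
  rw [← hsemi.iterate_right, add_right_iterate_apply, nsmul_blockShift hpq]

lemma eq_of_forall_natCast_eq [NeZero n] {α : Type*} {σ : α → α} {f g : ZMod (n * q) → α}
    (hpq : p.Coprime q) (hf : ∀ j, σ (f j) = f (j + blockShift n q p))
    (hg : ∀ j, σ (g j) = g (j + blockShift n q p)) (h : ∀ i < n, f (i : ℕ) = g (i : ℕ)) :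
    f = g := by
  funext j
  obtain ⟨i, hi, k, rfl⟩ := exists_eq_natCast_add_blockShift j
  rw [← iterate_apply_eq_apply_add_blockShift hf hpq, h i hi,
    iterate_apply_eq_apply_add_blockShift hg hpq]

lemma add_blockShift_induction (hpq : p.Coprime q) {P : ZMod (n * q) → Prop}
    (hP : ∀ j, P (j + blockShift n q p) → P j) {j : ZMod (n * q)} (hj : P j) (k : ZMod q) :
    P (j + blockShift n q k) := by
  have hiter : ∀ (l : ℕ) (x : ZMod (n * q)), P (x + l • blockShift n q p) → P x := by
    intro l
    induction l with
    | zero => simp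
    | succ l ih => exact fun x hx ↦ hP _ (ih _ (by rwa [add_assoc, ← succ_nsmul']))
  refine hiter (-k * (p : ZMod q)⁻¹).val _ ?_
  rwa [nsmul_blockShift hpq, map_neg, add_neg_cancel_right]

end BlockShift

section Interleave

variable {α : Type*} {n q p : ℕ}

/-- The sequence `f_0(0), …, f_{n-1}(0), f_0(p*), …, f_{n-1}(p*), f_0(2p*), …` of length `nq`, with
positions in `ℤ/nqℤ`. -/
def interleave (n q p : ℕ) (f : ℕ → ZMod q → α) (j : ZMod (n * q)) : α :=
  f (j.val % n) ((j.val / n : ℕ) * (p : ZMod q)⁻¹)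

lemma interleave_natCast (f : ℕ → ZMod q → α) {j : ℕ} (hj : j < n * q) :
    interleave n q p f j = f (j % n) ((j / n : ℕ) * (p : ZMod q)⁻¹) := by
  rw [interleave, ZMod.val_natCast_of_lt hj]

variable [NeZero q]

lemma interleave_natCast_add_blockShift (f : ℕ → ZMod q → α) {i : ℕ} (hi : i < n) (k : ZMod q) :
    interleave n q p f (i + blockShift n q k) = f i (k * (p : ZMod q)⁻¹) := by
  rw [interleave, val_natCast_add_blockShift hi, Nat.add_mul_mod_self_left, Nat.mod_eq_of_lt hi,
    Nat.add_mul_div_left _ _ (Nat.zero_lt_of_lt hi), Nat.div_eq_of_lt hi, zero_add,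
    ZMod.natCast_zmod_val]

lemma interleave_natCast_of_lt (f : ℕ → ZMod q → α) {i : ℕ} (hi : i < n) :
    interleave n q p f i = f i 0 := by
  simpa using interleave_natCast_add_blockShift (p := p) f hi 0

lemma interleave_natCast_add_blockShift_add (hpq : p.Coprime q) (f : ℕ → ZMod q → α) {i : ℕ}
    (hi : i < n) (k : ZMod q) :
    interleave n q p f (i + blockShift n q k + blockShift n q p) =
      f i (k * (p : ZMod q)⁻¹ + 1) := by
  rw [add_assoc, ← map_add, interleave_natCast_add_blockShift f hi, add_mul,
    ZMod.coe_mul_inv_eq_one p hpq]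

end Interleave

section Digits

/-- The digit condition for a rotation by `s`: the sequence is nondecreasing along
`0, 1, …, N - 1` and increases strictly on arriving at position `-s`. -/
def IsRotationalDigitSeq {N : ℕ} (s : ZMod N) (b : ZMod N → ℕ) : Prop :=
  (∀ j ≠ -1, b j ≤ b (j + 1)) ∧ b (-s - 1) < b (-s)

lemma isRotationalDigitSeq_interleave_iff {n q p : ℕ} [NeZero n] [NeZero q] {a : ℕ → ZMod q → ℕ} :
    IsRotationalDigitSeq (blockShift n q p) (interleave n q p a) ↔
      (∀ j : ℕ, j + 1 < n * q →
        a (j % n) (((j / n : ℕ) : ZMod q) * (p : ZMod q)⁻¹) ≤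
        a ((j + 1) % n) ((((j + 1) / n : ℕ) : ZMod q) * (p : ZMod q)⁻¹)) ∧
      a (n - 1) ((-((p : ZMod q) + 1)) * (p : ZMod q)⁻¹) <
        a 0 ((-(p : ZMod q)) * (p : ZMod q)⁻¹) := by
  have hzero : -blockShift n q p = ((0 : ℕ) : ZMod (n * q)) + blockShift n q (-(p : ZMod q)) := by
    rw [map_neg, Nat.cast_zero, zero_add]
  rw [IsRotationalDigitSeq, neg_blockShift_sub_one, hzero,
    interleave_natCast_add_blockShift a (Nat.sub_one_lt (NeZero.ne n)),
    interleave_natCast_add_blockShift a (NeZero.pos n), ← forall_natCast_iff_forall_ne_neg_one]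
  refine and_congr_left' (forall₂_congr fun j hj ↦ ?_)
  rw [← Nat.cast_succ, interleave_natCast a (Nat.lt_of_succ_lt hj), interleave_natCast a hj]

lemma IsRotationalDigitSeq.le_of_val_le {N : ℕ} [NeZero N] {s : ZMod N} {b : ZMod N → ℕ}
    (hb : IsRotationalDigitSeq s b) {i j : ZMod N} (hij : i.val ≤ j.val) : b i ≤ b j := by
  rcases hij.lt_or_eq with h | h
  · exact rel_of_val_lt_of_forall_rel_add_one (· ≤ ·) hb.1 h
  · rw [ZMod.val_injective N h]

lemma lt_iff_digit_lex {d a b : ℕ} (hd : 0 < d) {x y x' y' : ℝ}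
    (hx' : x' ∈ Set.Ico (0 : ℝ) 1) (hy' : y' ∈ Set.Ico (0 : ℝ) 1)
    (hx : d * x = a + x') (hy : d * y = b + y') : x < y ↔ a < b ∨ a = b ∧ x' < y' := by
  obtain ⟨hx0, hx1⟩ := hx'
  obtain ⟨hy0, hy1⟩ := hy'
  rw [← mul_lt_mul_iff_right₀ (Nat.cast_pos.2 hd), hx, hy]
  rcases lt_trichotomy a b with hab | rfl | hab
  · have : (a : ℝ) + 1 ≤ b := by exact_mod_cast hab
    simp only [hab, true_or, iff_true]
    linarith
  · simp
  · have : (b : ℝ) + 1 ≤ a := by exact_mod_cast hab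
    simp only [hab.not_gt, hab.ne', false_and, or_self, iff_false, not_lt]
    linarith

variable {α : Type*} [LinearOrder α]

lemma isRotationalDigitSeq_of_strictMono {N : ℕ} [NeZero N] {s : ZMod N} {f : ZMod N → α}
    {b : ZMod N → ℕ} (hlex : ∀ i j, f i < f j ↔ b i < b j ∨ b i = b j ∧ f (i + s) < f (j + s))
    (hs : s ≠ 0) (hf : ∀ i j : ZMod N, i.val < j.val → f i < f j) :
    IsRotationalDigitSeq s b := by
  have hasc : ∀ j ≠ -1, f j < f (j + 1) := fun j hj ↦
    hf _ _ (val_add_one_of_ne_neg_one hj ▸ Nat.lt_succ_self _)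
  have hjump : f (-s - 1) < f (-s) := by
    simpa using hasc (-s - 1) (by simpa [sub_eq_neg_self] using hs)
  have hwrap : f 0 ≤ f (-1) := by
    rcases eq_or_ne (-1 : ZMod N) 0 with h | h
    · rw [h]
    · exact (hf 0 (-1) (by simpa [Nat.pos_iff_ne_zero] using h)).le
  refine ⟨fun j hj ↦ ((hlex _ _).1 (hasc j hj)).elim le_of_lt fun h ↦ h.1.le, ?_⟩
  refine ((hlex _ _).1 hjump).resolve_right fun h ↦ hwrap.not_gt ?_
  simpa [sub_add_eq_add_sub] using h.2

lemma lt_add_one_of_isRotationalDigitSeq {n q p : ℕ} [NeZero n] [NeZero q] (hpq : p.Coprime q)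
    {f : ZMod (n * q) → α} {b : ZMod (n * q) → ℕ}
    (hlex : ∀ i j, f i < f j ↔
      b i < b j ∨ b i = b j ∧ f (i + blockShift n q p) < f (j + blockShift n q p))
    (hb : IsRotationalDigitSeq (blockShift n q p) b)
    (hinit : ∀ i : ℕ, i + 1 < n → f i < f (i + 1)) {j : ZMod (n * q)} (hj : j ≠ -1) :
    f j < f (j + 1) := by
  let IsAscent (j : ZMod (n * q)) : Prop := j = -1 ∨ f j < f (j + 1)
  have pull_back : ∀ j, IsAscent (j + blockShift n q p) → IsAscent j := by
    refine fun j hs ↦ or_iff_not_imp_left.2 fun hj ↦ (hlex _ _).2 ?_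
    rcases hs with hs | hs
    · obtain rfl : j = -blockShift n q p - 1 := by rw [eq_sub_of_add_eq hs, neg_sub_left, neg_add']
      exact Or.inl (by simpa using hb.2)
    · rw [add_right_comm] at hs
      exact (hb.1 j hj).lt_or_eq.imp_right fun h ↦ ⟨h, hs⟩
  obtain ⟨i, hi, k, rfl⟩ := exists_eq_natCast_add_blockShift j
  refine Or.resolve_left (?_ : IsAscent _) hj
  rcases Nat.lt_or_ge (i + 1) n with hin | hin
  · exact add_blockShift_induction hpq pull_back (Or.inr (hinit i hin)) k
  · rw [show i = n - 1 by omega, pred_add_blockShift]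
    exact add_blockShift_induction hpq pull_back (Or.inl rfl) (k + 1)

end Digits

section Expansion

variable {d q : ℕ}

/-- The value in `[0, 1]` of the repeating base-`d` expansion `0.‾(a_0 a_1 … a_{q-1})`; unlike
`tuplePoint` it is not reduced modulo `1`, so the tuple with all digits `d - 1` has value `1`. -/
noncomputable def expansionValue (d q : ℕ) (a : ZMod q → ℕ) : ℝ :=
  (∑ i ∈ Finset.range q, (a i : ℝ) * (d : ℝ) ^ (q - 1 - i)) / ((d : ℝ) ^ q - 1)

lemma mul_sum_mul_pow_add {R : Type*} [CommSemiring R] (x : R) (c : ℕ → R) (q : ℕ) :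
    x * ∑ i ∈ Finset.range q, c i * x ^ (q - 1 - i) + c q =
      c 0 * x ^ q + ∑ i ∈ Finset.range q, c (i + 1) * x ^ (q - 1 - i) := by
  calc
    _ = ∑ i ∈ Finset.range (q + 1), c i * x ^ (q - i) := by
      rw [Finset.sum_range_succ, Nat.sub_self, pow_zero, mul_one, Finset.mul_sum]
      congr 1
      refine Finset.sum_congr rfl fun i hi ↦ ?_
      rw [Finset.mem_range] at hi
      rw [show q - i = q - 1 - i + 1 by omega, pow_succ]
      ring
    _ = _ := by
      rw [Finset.sum_range_succ', Nat.sub_zero, add_comm]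
      simp only [Nat.sub_sub, add_comm 1]

lemma natCast_pow_sub_one_pos (hd : 1 < d) [NeZero q] : (0 : ℝ) < (d : ℝ) ^ q - 1 :=
  sub_pos.2 (one_lt_pow₀ (Nat.one_lt_cast.2 hd) (NeZero.ne q))

lemma mul_expansionValue (hd : 1 < d) [NeZero q] (a : ZMod q → ℕ) :
    d * expansionValue d q a = a 0 + expansionValue d q (fun j ↦ a (j + 1)) := by
  have h := mul_sum_mul_pow_add (d : ℝ) (fun i ↦ (a i : ℝ)) q
  have hpos := natCast_pow_sub_one_pos (q := q) hd
  simp only [ZMod.natCast_self, Nat.cast_zero, Nat.cast_add, Nat.cast_one] at h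
  unfold expansionValue
  field_simp
  linear_combination h

lemma expansionValue_nonneg (hd : 1 < d) [NeZero q] (a : ZMod q → ℕ) :
    0 ≤ expansionValue d q a :=
  div_nonneg (by positivity) (natCast_pow_sub_one_pos hd).le

lemma expansionValue_lt_one (hd : 1 < d) [NeZero q] {a : ZMod q → ℕ} (ha : ∀ j, a j < d)
    (hex : ∃ j, a j + 1 < d) : expansionValue d q a < 1 := by
  obtain ⟨j, hj⟩ := hex
  rw [expansionValue, div_lt_one (natCast_pow_sub_one_pos hd)]
  calc
    _ < ∑ i ∈ Finset.range q, ((d : ℝ) - 1) * (d : ℝ) ^ (q - 1 - i) := by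
      refine Finset.sum_lt_sum (fun i _ ↦ ?_) ⟨j.val, Finset.mem_range.2 (ZMod.val_lt j), ?_⟩
      · have : (a i : ℝ) + 1 ≤ d := by exact_mod_cast ha i
        gcongr
        linarith
      · have : (a j : ℝ) + 1 < d := by exact_mod_cast hj
        rw [ZMod.natCast_zmod_val]
        gcongr
        linarith
    _ = (d : ℝ) ^ q - 1 := by
      rw [← Finset.mul_sum, Finset.sum_range_reflect (fun i ↦ (d : ℝ) ^ i), mul_geom_sum]

lemma tuplePoint_eq_fract (a : ZMod q → ℕ) :
    tuplePoint d q a = Int.fract (expansionValue d q a) :=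
  rfl

lemma tuplePoint_mem_Ico (a : ZMod q → ℕ) : tuplePoint d q a ∈ Set.Ico (0 : ℝ) 1 :=
  ⟨Int.fract_nonneg _, Int.fract_lt_one _⟩

lemma tuplePoint_eq_expansionValue (hd : 1 < d) [NeZero q] {a : ZMod q → ℕ} (ha : ∀ j, a j < d)
    (hex : ∃ j, a j + 1 < d) : tuplePoint d q a = expansionValue d q a :=
  Int.fract_eq_self.2 ⟨expansionValue_nonneg hd a, expansionValue_lt_one hd ha hex⟩

lemma mul_tuplePoint (hd : 1 < d) [NeZero q] {a : ZMod q → ℕ} (ha : ∀ j, a j < d)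
    (hex : ∃ j, a j + 1 < d) :
    d * tuplePoint d q a = a 0 + tuplePoint d q (fun j ↦ a (j + 1)) := by
  obtain ⟨m, hm⟩ := hex
  rw [tuplePoint_eq_expansionValue hd ha ⟨m, hm⟩, mul_expansionValue hd,
    tuplePoint_eq_expansionValue hd (fun j ↦ ha (j + 1)) ⟨m - 1, by rwa [sub_add_cancel]⟩]

lemma sigmad_fract (x : ℝ) : sigmad d (Int.fract x) = Int.fract (d * x) := by
  rw [sigmad, Int.fract_eq_fract]
  exact ⟨-(d * ⌊x⌋), by push_cast [Int.fract]; ring⟩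

lemma sigmad_tuplePoint (hd : 1 < d) [NeZero q] (a : ZMod q → ℕ) :
    sigmad d (tuplePoint d q a) = tuplePoint d q (fun j ↦ a (j + 1)) := by
  rw [tuplePoint_eq_fract, sigmad_fract, mul_expansionValue hd, Int.fract_natCast_add,
    tuplePoint_eq_fract]

end Expansion

section RotationalListing

variable {d n q p : ℕ} [NeZero q] {X u : ZMod (n * q) → ℝ}

lemma sigmaOrbit_eq_range (hpq : p.Coprime q)
    (hX : ∀ j, sigmad d (X j) = X (j + blockShift n q p)) (j : ZMod (n * q)) :
    sigmaOrbit d (X j) = Set.range fun k : ZMod q ↦ X (j + blockShift n q k) := by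
  have hsemi : Function.Semiconj X (· + blockShift n q p) (sigmad d) := fun j ↦ (hX j).symm
  refine Set.Subset.antisymm ?_ ?_
  · rintro _ ⟨l, rfl⟩
    refine ⟨l • (p : ZMod q), ?_⟩
    beta_reduce
    rw [map_nsmul, ← hsemi.iterate_right, add_right_iterate_apply]
  · rintro _ ⟨k, rfl⟩
    exact ⟨_, iterate_apply_eq_apply_add_blockShift hX hpq j k⟩

variable [NeZero n]

lemma iUnion_sigmaOrbit_eq_range (hpq : p.Coprime q)
    (hX : ∀ j, sigmad d (X j) = X (j + blockShift n q p)) :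
    ⋃ i ∈ Finset.range n, sigmaOrbit d (X i) = Set.range X := by
  ext x
  simp only [Set.mem_iUnion, Finset.mem_range, sigmaOrbit_eq_range hpq hX, Set.mem_range,
    exists_prop]
  constructor
  · rintro ⟨i, -, k, hk⟩
    exact ⟨_, hk⟩
  · rintro ⟨j, rfl⟩
    obtain ⟨i, hi, k, rfl⟩ := exists_eq_natCast_add_blockShift j
    exact ⟨i, hi, k, rfl⟩

lemma IsRotational.exists_natCast_eq_of_least (hpq : p.Coprime q)
    (hu : IsRotational d (n * q) (blockShift n q p) u) {t : ℝ} (ht : t ∈ Set.range u)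
    (hleast : ∀ x ∈ sigmaOrbit d t, t ≤ x) : ∃ i < n, u (i : ℕ) = t := by
  obtain ⟨-, hmono, -, hsigma⟩ := hu
  obtain ⟨j, rfl⟩ := ht
  obtain ⟨i, hi, k, rfl⟩ := exists_eq_natCast_add_blockShift j
  have horbit : u i ∈ sigmaOrbit d (u (i + blockShift n q k)) := by
    rw [sigmaOrbit_eq_range hpq hsigma]
    exact ⟨-k, by simp⟩
  refine ⟨i, hi, ?_⟩
  have hval : ¬ (i : ZMod (n * q)).val < (i + blockShift n q k).val := fun h ↦
    (hmono _ _ h).not_ge (hleast _ horbit)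
  rw [val_natCast_of_lt_block hi, val_natCast_add_blockShift hi, not_lt,
    add_le_iff_nonpos_right, Nat.le_zero, mul_eq_zero, ZMod.val_eq_zero] at hval
  rw [hval.resolve_left (NeZero.ne n), map_zero, add_zero]

lemma IsRotational.eq_of_least (hpq : p.Coprime q)
    (hX : ∀ j, sigmad d (X j) = X (j + blockShift n q p))
    (hinc : StrictMonoOn (fun i : ℕ ↦ X i) (Set.Iio n))
    (hleast : ∀ i < n, ∀ x ∈ sigmaOrbit d (X (i : ℕ)), X (i : ℕ) ≤ x)
    (hu : IsRotational d (n * q) (blockShift n q p) u) (hrange : Set.range u = Set.range X) :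
    u = X := by
  have hu_mono : StrictMono fun i : Fin n ↦ u (i : ℕ) := fun i j hij ↦ hu.2.1 _ _ <| by
    rwa [val_natCast_of_lt_block i.2, val_natCast_of_lt_block j.2]
  have hX_mono : StrictMono fun i : Fin n ↦ X (i : ℕ) := fun i j hij ↦ hinc i.2 j.2 hij
  have hsub : Set.range (fun i : Fin n ↦ X (i : ℕ)) ⊆ Set.range fun i : Fin n ↦ u (i : ℕ) := by
    rintro _ ⟨i, rfl⟩
    obtain ⟨j, hj, h⟩ := hu.exists_natCast_eq_of_least hpq
      (hrange ▸ Set.mem_range_self (i : ZMod (n * q))) (hleast i i.2)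
    exact ⟨⟨j, hj⟩, h⟩
  have heq : Set.range (fun i : Fin n ↦ X (i : ℕ)) = Set.range fun i : Fin n ↦ u (i : ℕ) := by
    refine Set.eq_of_subset_of_ncard_le hsub (le_of_eq ?_) (Set.finite_range _)
    rw [← Set.image_univ, ← Set.image_univ, Set.ncard_image_of_injective _ hu_mono.injective,
      Set.ncard_image_of_injective _ hX_mono.injective]
  have hfun := (hu_mono.range_inj hX_mono).1 heq.symm
  exact eq_of_forall_natCast_eq hpq hu.2.2.2 hX fun i hi ↦ congrFun hfun ⟨i, hi⟩

lemma IsRotational.le_of_mem_sigmaOrbit (hpq : p.Coprime q)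
    (hX : IsRotational d (n * q) (blockShift n q p) X) {i : ℕ} (hi : i < n) {x : ℝ}
    (hx : x ∈ sigmaOrbit d (X i)) : X i ≤ x := by
  rw [sigmaOrbit_eq_range hpq hX.2.2.2] at hx
  obtain ⟨k, rfl⟩ := hx
  rcases eq_or_ne k 0 with rfl | hk
  · simp
  · refine (hX.2.1 _ _ ?_).le
    rw [val_natCast_of_lt_block hi, val_natCast_add_blockShift hi]
    exact Nat.lt_add_of_pos_right
      (Nat.mul_pos (NeZero.pos n) (Nat.pos_of_ne_zero ((ZMod.val_ne_zero k).2 hk)))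

theorem least_and_exists_isRotational_iff (hpq : p.Coprime q)
    (hX : ∀ j, sigmad d (X j) = X (j + blockShift n q p))
    (hinc : StrictMonoOn (fun i : ℕ ↦ X i) (Set.Iio n)) :
    ((∀ i < n, ∀ x ∈ sigmaOrbit d (X (i : ℕ)), X (i : ℕ) ≤ x) ∧
      ∃ u : ZMod (n * q) → ℝ, Set.range u = (⋃ i ∈ Finset.range n, sigmaOrbit d (X (i : ℕ))) ∧
        IsRotational d (n * q) (blockShift n q p) u) ↔
      IsRotational d (n * q) (blockShift n q p) X := by
  rw [iUnion_sigmaOrbit_eq_range hpq hX]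
  refine ⟨?_, fun h ↦ ⟨fun i hi x ↦ h.le_of_mem_sigmaOrbit hpq hi, X, rfl, h⟩⟩
  rintro ⟨hleast, u, hrange, hu⟩
  exact hu.eq_of_least hpq hX hinc hleast hrange ▸ hu

end RotationalListing

section OrbitSeq

variable {d n q p : ℕ} {a : ℕ → ZMod q → ℕ}

/-- The interleaved sequence of the points `0.‾(a_m a_{m+1} … a_{m+q-1})` of the orbits of the
tuples `a 0, …, a (n - 1)`. -/
noncomputable def orbitSeq (d n q p : ℕ) (a : ℕ → ZMod q → ℕ) : ZMod (n * q) → ℝ :=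
  interleave n q p fun i m ↦ tuplePoint d q fun j ↦ a i (j + m)

lemma orbitSeq_mem_Ico (j : ZMod (n * q)) : orbitSeq d n q p a j ∈ Set.Ico (0 : ℝ) 1 := by
  rw [orbitSeq, interleave]
  exact tuplePoint_mem_Ico _

variable [NeZero q]

lemma orbitSeq_natCast {i : ℕ} (hi : i < n) : orbitSeq d n q p a i = tuplePoint d q (a i) := by
  simp only [orbitSeq, interleave_natCast_of_lt _ hi, add_zero]

variable [NeZero n]

lemma sigmad_orbitSeq (hd : 1 < d) (hpq : p.Coprime q) (j : ZMod (n * q)) :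
    sigmad d (orbitSeq d n q p a j) = orbitSeq d n q p a (j + blockShift n q p) := by
  obtain ⟨i, hi, k, rfl⟩ := exists_eq_natCast_add_blockShift j
  rw [orbitSeq, interleave_natCast_add_blockShift _ hi,
    interleave_natCast_add_blockShift_add hpq _ hi, sigmad_tuplePoint hd]
  simp only [add_assoc, add_comm (1 : ZMod q)]

lemma mul_orbitSeq (hd : 1 < d) (hpq : p.Coprime q) (ha : ∀ i < n, ∀ j, a i j < d)
    (hex : ∀ i < n, ∃ j, a i j + 1 < d) (j : ZMod (n * q)) :
    d * orbitSeq d n q p a j =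
      interleave n q p a j + orbitSeq d n q p a (j + blockShift n q p) := by
  obtain ⟨i, hi, k, rfl⟩ := exists_eq_natCast_add_blockShift j
  obtain ⟨m, hm⟩ := hex i hi
  rw [orbitSeq, interleave_natCast_add_blockShift _ hi, interleave_natCast_add_blockShift _ hi,
    interleave_natCast_add_blockShift_add hpq _ hi,
    mul_tuplePoint hd (fun _ ↦ ha i hi _) ⟨m - k * (p : ZMod q)⁻¹, by rwa [sub_add_cancel]⟩]
  simp only [zero_add, add_assoc, add_comm (1 : ZMod q)]

lemma orbitSeq_lt_iff (hd : 1 < d) (hpq : p.Coprime q) (ha : ∀ i < n, ∀ j, a i j < d)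
    (hex : ∀ i < n, ∃ j, a i j + 1 < d) (i j : ZMod (n * q)) :
    orbitSeq d n q p a i < orbitSeq d n q p a j ↔
      interleave n q p a i < interleave n q p a j ∨
      interleave n q p a i = interleave n q p a j ∧
        orbitSeq d n q p a (i + blockShift n q p) < orbitSeq d n q p a (j + blockShift n q p) :=
  lt_iff_digit_lex (Nat.zero_lt_of_lt hd) (orbitSeq_mem_Ico _) (orbitSeq_mem_Ico _)
    (mul_orbitSeq hd hpq ha hex i) (mul_orbitSeq hd hpq ha hex j)

lemma IsRotational.exists_digit_add_one_lt (hq : 1 < q) (ha : ∀ i < n, ∀ j, a i j < d)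
    (hX : IsRotational d (n * q) (blockShift n q p) (orbitSeq d n q p a)) {i : ℕ} (hi : i < n) :
    ∃ j, a i j + 1 < d := by
  by_contra! hmax
  have hconst : ∀ j, a i j = d - 1 := fun j ↦ by have := ha i hi j; have := hmax j; omega
  have : Fact (1 < q) := ⟨hq⟩
  have hlt : orbitSeq d n q p a (i + blockShift n q 0) <
      orbitSeq d n q p a (i + blockShift n q 1) := hX.2.1 _ _ <| by
    rw [val_natCast_add_blockShift hi, val_natCast_add_blockShift hi, ZMod.val_zero, ZMod.val_one]
    have := NeZero.pos n
    omega
  simp only [orbitSeq, interleave_natCast_add_blockShift _ hi, hconst, lt_irrefl] at hlt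

lemma IsRotationalDigitSeq.exists_digit_add_one_lt (ha : ∀ i < n, ∀ j, a i j < d)
    (hb : IsRotationalDigitSeq (blockShift n q p) (interleave n q p a)) {i : ℕ} (hi : i < n) :
    ∃ j, a i j + 1 < d := by
  have hval : (i : ZMod (n * q)).val ≤ (-blockShift n q p - 1).val := by
    rw [val_natCast_of_lt_block hi, neg_blockShift_sub_one,
      val_natCast_add_blockShift (Nat.sub_one_lt (NeZero.ne n))]
    omega
  refine ⟨0, ?_⟩
  calc
    a i 0 + 1 = interleave n q p a i + 1 := by rw [interleave_natCast_of_lt a hi]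
    _ ≤ interleave n q p a (-blockShift n q p - 1) + 1 := Nat.succ_le_succ (hb.le_of_val_le hval)
    _ ≤ interleave n q p a (-blockShift n q p) := hb.2
    _ < d := ha _ (Nat.mod_lt _ (NeZero.pos n)) _

theorem isRotational_orbitSeq_iff (hd : 1 < d) (hq : 1 < q) (hpq : p.Coprime q)
    (ha : ∀ i < n, ∀ j, a i j < d)
    (hinc : StrictMonoOn (fun i : ℕ ↦ tuplePoint d q (a i)) (Set.Iio n)) :
    IsRotational d (n * q) (blockShift n q p) (orbitSeq d n q p a) ↔
      IsRotationalDigitSeq (blockShift n q p) (interleave n q p a) := by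
  have : Fact (1 < q) := ⟨hq⟩
  have hs : blockShift n q p ≠ 0 :=
    blockShift_ne_zero ((ZMod.isUnit_iff_coprime p q).2 hpq).ne_zero
  constructor
  · intro hX
    have hex := fun i (hi : i < n) ↦ hX.exists_digit_add_one_lt hq ha hi
    exact isRotationalDigitSeq_of_strictMono (orbitSeq_lt_iff hd hpq ha hex) hs hX.2.1
  · intro hb
    have hlex := orbitSeq_lt_iff hd hpq ha fun i hi ↦ hb.exists_digit_add_one_lt ha hi
    have hinit : ∀ i : ℕ, i + 1 < n →
        orbitSeq d n q p a i < orbitSeq d n q p a (i + 1) := by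
      intro i hi
      rw [← Nat.cast_succ, orbitSeq_natCast (Nat.lt_of_succ_lt hi), orbitSeq_natCast hi]
      exact hinc (Nat.lt_of_succ_lt hi) hi (Nat.lt_succ_self i)
    exact ⟨orbitSeq_mem_Ico, fun i j ↦ rel_of_val_lt_of_forall_rel_add_one (· < ·) fun j ↦
      lt_add_one_of_isRotationalDigitSeq hpq hlex hb hinit, hs, sigmad_orbitSeq hd hpq⟩

end OrbitSeq

theorem stmt8_general (d q p n : ℕ) (hd : 2 ≤ d) (hq : 2 ≤ q) (hpq : Nat.gcd p q = 1) (hn : 1 ≤ n)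
    (a : ℕ → ZMod q → ℕ) (ha : ∀ i < n, ∀ j, a i j < d)
    (hinc : ∀ i < n, ∀ j < n, i < j → tuplePoint d q (a i) < tuplePoint d q (a j)) :
    ((∀ i < n, ∀ x ∈ sigmaOrbit d (tuplePoint d q (a i)), tuplePoint d q (a i) ≤ x) ∧
      ∃ u : ZMod (n * q) → ℝ,
        Set.range u = (⋃ i ∈ Finset.range n, sigmaOrbit d (tuplePoint d q (a i))) ∧
        IsRotational d (n * q) ((n * p : ℕ) : ZMod (n * q)) u) ↔
    ((∀ j : ℕ, j + 1 < n * q →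
        a (j % n) (((j / n : ℕ) : ZMod q) * ((p : ZMod q))⁻¹) ≤
        a ((j + 1) % n) ((((j + 1) / n : ℕ) : ZMod q) * ((p : ZMod q))⁻¹)) ∧
      a (n - 1) ((-((p : ZMod q) + 1)) * ((p : ZMod q))⁻¹) <
        a 0 ((-(p : ZMod q)) * ((p : ZMod q))⁻¹)) := by
  have : NeZero n := ⟨by omega⟩
  have : NeZero q := ⟨by omega⟩
  have hinc_tuple : StrictMonoOn (fun i : ℕ ↦ tuplePoint d q (a i)) (Set.Iio n) :=
    fun i hi j hj ↦ hinc i hi j hj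
  have horbit : ∀ i < n, tuplePoint d q (a i) = orbitSeq d n q p a (i : ℕ) :=
    fun i hi ↦ (orbitSeq_natCast hi).symm
  have hinc_orbit : StrictMonoOn (fun i : ℕ ↦ orbitSeq d n q p a i) (Set.Iio n) :=
    hinc_tuple.congr horbit
  rw [← isRotationalDigitSeq_interleave_iff, ← isRotational_orbitSeq_iff hd hq hpq ha hinc_tuple,
    ← least_and_exists_isRotational_iff hpq (sigmad_orbitSeq hd hpq) hinc_orbit,
    blockShift_natCast]
  refine and_congr (forall₂_congr fun i hi ↦ by rw [horbit i hi]) ?_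
  rw [Set.iUnion₂_congr fun i hi ↦ by rw [horbit i (Finset.mem_range.1 hi)]]

theorem stmt8 (d q p n : ℕ) (hd : 2 ≤ d) (hq : 2 ≤ q)
    (hp1 : 1 ≤ p) (hp2 : p ≤ q - 1) (hpq : Nat.gcd p q = 1) (hn : 1 ≤ n)
    -- the digits `a_j^{(i)}` of the points `t_i = tuplePoint d q (a i)`, `1 ≤ i ≤ n`
    -- (here `0 ≤ i ≤ n-1`)
    (a : ℕ → ZMod q → ℕ) (ha : ∀ i < n, ∀ j, a i j < d)
    -- each orbit `O_i` has size `q`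
    (hsize : ∀ i < n, (sigmaOrbit d (tuplePoint d q (a i))).ncard = q)
    -- the orbits are pairwise distinct
    (hdist : ∀ i < n, ∀ j < n, i ≠ j →
      sigmaOrbit d (tuplePoint d q (a i)) ≠ sigmaOrbit d (tuplePoint d q (a j)))
    -- `t_1 < t_2 < ⋯ < t_n`
    (hinc : ∀ i < n, ∀ j < n, i < j → tuplePoint d q (a i) < tuplePoint d q (a j)) :
    -- LHS: each `t_i` is the least element of `O_i`, and `A = O_1 ∪ ⋯ ∪ O_n` is
    -- `σ_d`-rotational with rotation number `p/q` in lowest terms, i.e. rotation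
    -- number `np/(nq)` for its `nq` elements
    ((∀ i < n, ∀ x ∈ sigmaOrbit d (tuplePoint d q (a i)), tuplePoint d q (a i) ≤ x) ∧
      ∃ u : ZMod (n * q) → ℝ,
        Set.range u = (⋃ i ∈ Finset.range n, sigmaOrbit d (tuplePoint d q (a i))) ∧
        IsRotational d (n * q) ((n * p : ℕ) : ZMod (n * q)) u) ↔
    -- RHS: the interleaved sequence (position `j = k·n + i` carries the digit
    -- `a^{(i+1)}_{k·p*}`) is nondecreasing, and `a^{(n)}_{-(p+1)p*} < a^{(1)}_{-p·p*}`
    ((∀ j : ℕ, j + 1 < n * q →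
        a (j % n) (((j / n : ℕ) : ZMod q) * ((p : ZMod q))⁻¹) ≤
        a ((j + 1) % n) ((((j + 1) / n : ℕ) : ZMod q) * ((p : ZMod q))⁻¹)) ∧
      a (n - 1) ((-((p : ZMod q) + 1)) * ((p : ZMod q))⁻¹) <
        a 0 ((-(p : ZMod q)) * ((p : ZMod q))⁻¹)) := by
  exact stmt8_general d q p n hd hq hpq hn a ha hinc
end

section
/- Fix an integer d ≥ 2. Every σ_d-rotational set A ⊆ T is the union of at most d−1 orbits under σ_d; that is, the number of distinct orbits whose union is A is at most d−1. Equivalently, if A is σ_d-rotational with rotation number p/q then gcd(p,q) ≤ d−1. -/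
/-! Multiplication by `d` carries the arc between cyclic neighbours `t i`, `t (i + 1)` onto an arc
that ends at `t (i + p)`, `t (i + 1 + p)`, possibly after winding around the circle; so `d` times
the gap at `i` exceeds the gap at `i + p` by an integer. Summed over a coset of `⟨p⟩` in `ℤ/qℤ`,
these integers give `(d - 1)` times the total gap length of the coset, a positive integer. The gaps
add up to `1`, so there are at most `d - 1` cosets; and the orbits in the rotational set are exactly
the images of these cosets. -/

section IntegerExcess

variable {ι κ R : Type*} [Ring R] [LinearOrder R] [IsStrictOrderedRing R]
  {a : R} {e : Equiv.Perm ι} {g : ι → R}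

theorem one_le_sub_one_mul_sum_of_int_excess {s : Finset ι} (ha : 1 < a) (hs : s.Nonempty)
    (he : ∀ i, i ∈ s ↔ e i ∈ s) (hg : ∀ i ∈ s, 0 < g i)
    (hint : ∀ i ∈ s, ∃ m : ℤ, a * g i - g (e i) = m) :
    1 ≤ (a - 1) * ∑ i ∈ s, g i := by
  choose! m hm using hint
  have hsum : (a - 1) * ∑ i ∈ s, g i = ((∑ i ∈ s, m i : ℤ) : R) := by
    calc (a - 1) * ∑ i ∈ s, g i = a * ∑ i ∈ s, g i - ∑ i ∈ s, g (e i) := by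
          rw [sub_one_mul, Finset.sum_equiv e he fun _ _ ↦ rfl]
      _ = ∑ i ∈ s, (a * g i - g (e i)) := by rw [Finset.sum_sub_distrib, Finset.mul_sum]
      _ = ((∑ i ∈ s, m i : ℤ) : R) := by rw [Finset.sum_congr rfl hm, Int.cast_sum]
  have hpos : 0 < (a - 1) * ∑ i ∈ s, g i :=
    mul_pos (sub_pos.2 ha) (Finset.sum_pos hg hs)
  rw [hsum] at hpos ⊢
  exact_mod_cast hpos

theorem natCard_le_sub_one_mul_sum_of_int_excess [Fintype ι] {π : ι → κ} (ha : 1 < a)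
    (hπ : Function.Surjective π) (hπe : ∀ i, π (e i) = π i) (hg : ∀ i, 0 < g i)
    (hint : ∀ i, ∃ m : ℤ, a * g i - g (e i) = m) :
    (Nat.card κ : R) ≤ (a - 1) * ∑ i, g i := by
  classical
  have : Finite κ := .of_surjective π hπ
  have : Fintype κ := .ofFinite κ
  have hfiber (k : κ) : 1 ≤ (a - 1) * ∑ i with π i = k, g i := by
    obtain ⟨i, hi⟩ := hπ k
    exact one_le_sub_one_mul_sum_of_int_excess (e := e) ha ⟨i, by simpa using hi⟩
      (by simp [hπe]) (fun i _ ↦ hg i) fun i _ ↦ hint i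
  calc (Nat.card κ : R) = ∑ _k : κ, 1 := by simp
    _ ≤ ∑ k, (a - 1) * ∑ i with π i = k, g i := Finset.sum_le_sum fun k _ ↦ hfiber k
    _ = (a - 1) * ∑ i, g i := by rw [← Finset.mul_sum, Finset.sum_fiberwise Finset.univ π g]

end IntegerExcess

section ZMod

variable {q : ℕ} [NeZero q]

theorem zmod_val_lt_val_add_one {i : ZMod q} (hi : i ≠ -1) : i.val < (i + 1).val := by
  obtain ⟨n, rfl⟩ := Nat.exists_eq_succ_of_ne_zero (NeZero.ne q)
  have hval : i.val ≠ n := fun h ↦ hi (ZMod.val_injective _ (h.trans (ZMod.val_neg_one n).symm))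
  exact Fin.lt_add_one_iff.2 (Fin.lt_last_iff_ne_last.2 fun h ↦ hval (congrArg Fin.val h))

theorem index_zmultiples_eq_gcd (p : ZMod q) :
    (AddSubgroup.zmultiples p).index = Nat.gcd p.val q := by
  have hmul : Nat.gcd p.val q * addOrderOf p = q := by
    rw [← ZMod.natCast_zmod_val p, ZMod.addOrderOf_coe _ (NeZero.ne q), ZMod.natCast_zmod_val,
      Nat.gcd_comm, Nat.mul_div_cancel' (Nat.gcd_dvd_left _ _)]
  have hindex := (AddSubgroup.zmultiples p).index_mul_card
  rw [Nat.card_zmultiples, Nat.card_zmod] at hindex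
  exact Nat.eq_of_mul_eq_mul_right (addOrderOf_pos p) (hindex.trans hmul.symm)

/-- The length of the arc of `ℝ/ℤ` from `t i` to its cyclic successor `t (i + 1)`, where `t` lists
representatives in increasing order. The arc at `i = -1` wraps around `0`, hence the added `1`;
for `q = 1` it is the whole circle. -/
def cyclicGap (t : ZMod q → ℝ) (i : ZMod q) : ℝ :=
  t (i + 1) - t i + if i = -1 then 1 else 0

theorem sum_cyclicGap (t : ZMod q → ℝ) : ∑ i, cyclicGap t i = 1 := by
  have hshift : ∑ i, t (i + 1) = ∑ i, t i := Equiv.sum_comp (Equiv.addRight 1) t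
  simp [cyclicGap, Finset.sum_add_distrib, Finset.sum_sub_distrib, hshift]

theorem cyclicGap_pos {t : ZMod q → ℝ} (ht : ∀ i, t i ∈ Set.Ico (0 : ℝ) 1)
    (hmono : ∀ i j : ZMod q, i.val < j.val → t i < t j) (i : ZMod q) : 0 < cyclicGap t i := by
  by_cases hi : i = -1
  · simp only [cyclicGap, hi, if_true]
    linarith [(ht (-1 + 1)).1, (ht (-1)).2]
  · simpa [cyclicGap, hi] using hmono i (i + 1) (zmod_val_lt_val_add_one hi)

end ZMod

namespace IsRotational

variable {d q : ℕ} {p : ZMod q} {t : ZMod q → ℝ}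

theorem exists_int_cyclicGap (h : IsRotational d q p t) (i : ZMod q) :
    ∃ m : ℤ, d * cyclicGap t i - cyclicGap t (i + p) = m := by
  have hfloor (j : ZMod q) : d * t j = t (j + p) + ⌊d * t j⌋ := by
    rw [← h.2.2.2 j, sigmad, Int.fract_add_floor]
  refine ⟨⌊d * t (i + 1)⌋ - ⌊d * t i⌋ + d * (if i = -1 then 1 else 0)
    - (if i + p = -1 then 1 else 0), ?_⟩
  have hsucc := hfloor (i + 1)
  rw [add_right_comm] at hsucc
  push_cast [cyclicGap]
  linear_combination hsucc - hfloor i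

theorem injective [NeZero q] (h : IsRotational d q p t) : Function.Injective t := by
  intro i j hij
  by_contra hne
  rcases lt_or_gt_of_ne fun hval ↦ hne (ZMod.val_injective q hval) with hlt | hlt
  · exact (h.2.1 i j hlt).ne hij
  · exact (h.2.1 j i hlt).ne' hij

theorem iterate_sigmad (h : IsRotational d q p t) (k : ℕ) (i : ZMod q) :
    (sigmad d)^[k] (t i) = t (i + k • p) := by
  have hsemi : Function.Semiconj t (· + p) (sigmad d) := fun i ↦ (h.2.2.2 i).symm
  rw [← (hsemi.iterate_right k).eq, add_right_iterate]

theorem sigmaOrbit_eq_image [NeZero q] (h : IsRotational d q p t) (i : ZMod q) :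
    sigmaOrbit d (t i) =
      t '' ((↑) ⁻¹' {(i : ZMod q ⧸ AddSubgroup.zmultiples p)}) := by
  ext s
  simp only [sigmaOrbit, h.iterate_sigmad, Set.mem_ofPred_eq, Set.mem_image, Set.mem_preimage,
    Set.mem_singleton_iff, eq_comm (b := (i : ZMod q ⧸ AddSubgroup.zmultiples p)),
    QuotientAddGroup.eq, ← mem_multiples_iff_mem_zmultiples, AddSubmonoid.mem_multiples_iff]
  constructor
  · rintro ⟨k, rfl⟩
    exact ⟨i + k • p, ⟨k, by abel⟩, rfl⟩
  · rintro ⟨j, ⟨k, hk⟩, rfl⟩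
    exact ⟨k, by rw [hk, add_neg_cancel_left]⟩

theorem ncard_sigmaOrbit_eq_index [NeZero q] (h : IsRotational d q p t) :
    {O : Set ℝ | ∃ x ∈ Set.range t, O = sigmaOrbit d x}.ncard =
      (AddSubgroup.zmultiples p).index := by
  let imageOfCoset (c : ZMod q ⧸ AddSubgroup.zmultiples p) : Set ℝ := t '' ((↑) ⁻¹' {c})
  have hrange : {O : Set ℝ | ∃ x ∈ Set.range t, O = sigmaOrbit d x} = Set.range imageOfCoset := by
    ext O
    simp [imageOfCoset, h.sigmaOrbit_eq_image, (QuotientAddGroup.mk_surjective).exists, eq_comm]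
  have hinj : Function.Injective imageOfCoset :=
    h.injective.image_injective.comp <|
      (QuotientAddGroup.mk_surjective.preimage_injective).comp Set.singleton_injective
  rw [hrange, Set.ncard_range_of_injective hinj, AddSubgroup.index]

theorem index_zmultiples_le [NeZero q] (hd : 2 ≤ d) (h : IsRotational d q p t) :
    (AddSubgroup.zmultiples p).index ≤ d - 1 := by
  have hcard : ((AddSubgroup.zmultiples p).index : ℝ) ≤ (d - 1) * ∑ i, cyclicGap t i :=
    natCard_le_sub_one_mul_sum_of_int_excess (e := Equiv.addRight p) (by exact_mod_cast hd)
      QuotientAddGroup.mk_surjective (by simp) (cyclicGap_pos h.1 h.2.1) h.exists_int_cyclicGap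
  rw [sum_cyclicGap, mul_one, ← Nat.cast_pred (by omega)] at hcard
  exact_mod_cast hcard

end IsRotational

theorem stmt12 (d q : ℕ) (hd : 2 ≤ d) (hq : 1 ≤ q) (p : ZMod q)
    (t : ZMod q → ℝ) (h : IsRotational d q p t) :
    -- the number of distinct orbits whose union is `A = range t` is at most `d-1`,
    -- equivalently `gcd(p,q) ≤ d-1`
    {O : Set ℝ | ∃ x ∈ Set.range t, O = sigmaOrbit d x}.ncard ≤ d - 1 ∧
    Nat.gcd p.val q ≤ d - 1 := by
  have : NeZero q := ⟨by omega⟩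
  have hindex := h.index_zmultiples_le hd
  exact ⟨h.ncard_sigmaOrbit_eq_index.trans_le hindex, index_zmultiples_eq_gcd p ▸ hindex⟩
end
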